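/- For every ν > 0 there exists a constant c > (ν+1)²/(4ν) such that for all δ > 0, ∫₀^δ exp(-r^ν/2) dr ≥ c_ν⁻¹ · exp(-c/δ^ν), where c_ν > 0 is the constant with c_ν · ∫₀^∞ exp(-r^ν/2) dr = 1. -/

import Mathlib

open Real MeasureTheory

/-- For every `ν > 0` there is `c > (ν+1)²/(4ν)` such that for all `δ > 0`,
`∫₀^δ exp(-r^ν/2) dr ≥ c_ν⁻¹ · exp(-c/δ^ν)`, where
`c_ν⁻¹ = ∫₀^∞ exp(-r^ν/2) dr`. -/
theorem small_ball_exp_integral_lower_bound (ν : ℝ) (hν : 0 < ν) :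
    ∃ c : ℝ, c > (ν + 1) ^ 2 / (4 * ν) ∧
      ∀ δ : ℝ, 0 < δ →
        ∫ r in (0:ℝ)..δ, Real.exp (-(r ^ ν) / 2) ≥
          (∫ r in Set.Ioi (0:ℝ), Real.exp (-(r ^ ν) / 2)) * Real.exp (-c / δ ^ ν) := by
  have hint : IntegrableOn (fun r : ℝ => Real.exp (-(r ^ ν) / 2)) (Set.Ioi 0) := by
    have := integrableOn_rpow_mul_exp_neg_mul_rpow (p := ν) (s := 0) (b := 1/2)
      (by norm_num) hν (by norm_num)
    refine this.congr_fun (fun r hr => ?_) measurableSet_Ioi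
    simp only [Real.rpow_zero, one_mul]
    congr 1; ring
  have hint2 : IntegrableOn (fun r : ℝ => r ^ ν * Real.exp (-(r ^ ν) / 2)) (Set.Ioi 0) := by
    have := integrableOn_rpow_mul_exp_neg_mul_rpow (p := ν) (s := ν) (b := 1/2)
      (by linarith) hν (by norm_num)
    refine this.congr_fun (fun r hr => ?_) measurableSet_Ioi
    simp only
    congr 2; ring
  -- lower bound for the truncated integral
  have hlow : ∀ δ : ℝ, 0 < δ → δ ≤ 1 →
      δ * Real.exp (-1 / 2) ≤ ∫ r in (0:ℝ)..δ, Real.exp (-(r ^ ν) / 2) := by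
    intro δ h0 h1
    rw [intervalIntegral.integral_of_le h0.le]
    have h := setIntegral_mono_on (μ := volume) (s := Set.Ioc (0:ℝ) δ)
      (f := fun _ => Real.exp (-1 / 2)) (g := fun r : ℝ => Real.exp (-(r ^ ν) / 2))
      (integrableOn_const (by simp)) (hint.mono_set Set.Ioc_subset_Ioi_self) measurableSet_Ioc
      (fun r hr => by
        have : r ^ ν ≤ 1 := Real.rpow_le_one hr.1.le (hr.2.trans h1) hν.le
        apply Real.exp_le_exp.2
        linarith)
    simpa [h0.le] using h
  have hsplit : ∀ δ : ℝ, 0 < δ → ∫ r in Set.Ioi (0:ℝ), Real.exp (-(r ^ ν) / 2) =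
      (∫ r in (0:ℝ)..δ, Real.exp (-(r ^ ν) / 2)) +
        ∫ r in Set.Ioi δ, Real.exp (-(r ^ ν) / 2) := by
    intro δ h0
    rw [intervalIntegral.integral_of_le h0.le, ← Set.Ioc_union_Ioi_eq_Ioi h0.le]
    exact setIntegral_union Set.Ioc_disjoint_Ioi_same measurableSet_Ioi
      (hint.mono_set Set.Ioc_subset_Ioi_self) (hint.mono_set (Set.Ioi_subset_Ioi h0.le))
  set I := ∫ r in Set.Ioi (0:ℝ), Real.exp (-(r ^ ν) / 2) with hI
  set M := ∫ r in Set.Ioi (0:ℝ), r ^ ν * Real.exp (-(r ^ ν) / 2) with hM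
  have hI0 : 0 ≤ I := setIntegral_nonneg measurableSet_Ioi (fun r _ => (Real.exp_pos _).le)
  have hM0 : 0 ≤ M := setIntegral_nonneg measurableSet_Ioi
    (fun r hr => mul_nonneg (Real.rpow_nonneg (le_of_lt hr) _) (Real.exp_pos _).le)
  have htail : ∀ δ : ℝ, 0 < δ →
      δ ^ ν * (∫ r in Set.Ioi δ, Real.exp (-(r ^ ν) / 2)) ≤ M := by
    intro δ h0
    rw [← integral_const_mul]
    calc ∫ r in Set.Ioi δ, δ ^ ν * Real.exp (-(r ^ ν) / 2)
        ≤ ∫ r in Set.Ioi δ, r ^ ν * Real.exp (-(r ^ ν) / 2) := by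
          refine setIntegral_mono_on ((hint.mono_set (Set.Ioi_subset_Ioi h0.le)).const_mul _)
            (hint2.mono_set (Set.Ioi_subset_Ioi h0.le)) measurableSet_Ioi (fun r hr => ?_)
          exact mul_le_mul_of_nonneg_right
            (Real.rpow_le_rpow h0.le (le_of_lt hr) hν.le) (Real.exp_pos _).le
      _ ≤ M := by
          refine setIntegral_mono_set hint2 ?_ (Set.Ioi_subset_Ioi h0.le).eventuallyLE
          refine (ae_restrict_iff' measurableSet_Ioi).2 (Filter.Eventually.of_forall ?_)
          exact fun r hr => mul_nonneg (Real.rpow_nonneg (le_of_lt hr) _) (Real.exp_pos _).le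
  have hE : 0 < Real.exp (-1 / 2) := Real.exp_pos _
  have hA : 0 < (ν + 1) ^ 2 / (4 * ν) := by positivity
  have hB : 0 ≤ M / Real.exp (-1 / 2) := by positivity
  have hν' : 0 < 1 / ν := by positivity
  refine ⟨(ν + 1) ^ 2 / (4 * ν) + 1 / ν + 1 / 2 + I + M / Real.exp (-1 / 2), by linarith, ?_⟩
  intro δ h0
  generalize hc : (ν + 1) ^ 2 / (4 * ν) + 1 / ν + 1 / 2 + I + M / Real.exp (-1 / 2) = c
  have hd : 0 < δ ^ ν := Real.rpow_pos_of_pos h0 _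
  have hx0 : 0 < 1 / δ ^ ν := by positivity
  have hcx : -c / δ ^ ν = -(c * (1 / δ ^ ν)) := by ring
  rw [ge_iff_le, hcx, Real.exp_neg, ← div_eq_mul_inv, div_le_iff₀ (Real.exp_pos _)]
  rcases le_total δ 1 with h1 | h1
  · have hx1 : 1 ≤ 1 / δ ^ ν := by
      rw [le_div_iff₀ hd, one_mul]; exact Real.rpow_le_one h0.le h1 hν.le
    have hlog : -Real.log δ ≤ 1 / ν * (1 / δ ^ ν) := by
      have h := Real.log_le_sub_one_of_pos hx0
      rw [one_div (δ ^ ν), Real.log_inv, Real.log_rpow h0] at h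
      rw [one_div_mul_eq_div, le_div_iff₀ hν, one_div]
      linarith
    calc I ≤ Real.exp I := by linarith [Real.add_one_le_exp I]
      _ ≤ Real.exp (Real.log δ + -1 / 2 + c * (1 / δ ^ ν)) := by
          apply Real.exp_le_exp.2
          have : (1 / ν) * (1 / δ ^ ν) + (1 / 2 + I) * (1 / δ ^ ν) ≤ c * (1 / δ ^ ν) := by
            rw [← add_mul]
            exact mul_le_mul_of_nonneg_right (by linarith) hx0.le
          nlinarith
      _ = δ * Real.exp (-1 / 2) * Real.exp (c * (1 / δ ^ ν)) := by
          rw [Real.exp_add, Real.exp_add, Real.exp_log h0]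
      _ ≤ _ := mul_le_mul_of_nonneg_right (hlow δ h0 h1) (Real.exp_pos _).le
  · have hF : Real.exp (-1 / 2) ≤ ∫ r in (0:ℝ)..δ, Real.exp (-(r ^ ν) / 2) := by
      have h2 := hlow 1 one_pos le_rfl
      rw [one_mul] at h2
      refine h2.trans ?_
      rw [intervalIntegral.integral_of_le zero_le_one, intervalIntegral.integral_of_le h0.le]
      exact setIntegral_mono_set (hint.mono_set Set.Ioc_subset_Ioi_self)
        (Filter.Eventually.of_forall fun r => (Real.exp_pos _).le)
        (Set.Ioc_subset_Ioc_right h1).eventuallyLE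
    have hT := htail δ h0
    have hS := hsplit δ h0
    set F := ∫ r in (0:ℝ)..δ, Real.exp (-(r ^ ν) / 2)
    set T := ∫ r in Set.Ioi δ, Real.exp (-(r ^ ν) / 2)
    have hT' : T ≤ M * (1 / δ ^ ν) := by
      rw [mul_one_div, le_div_iff₀ hd]; linarith
    have hcM : M ≤ F * c := by
      calc M = Real.exp (-1 / 2) * (M / Real.exp (-1 / 2)) := by field_simp
        _ ≤ F * c := mul_le_mul hF (by linarith) hB (by linarith)
    calc I = F + T := hS
      _ ≤ F + F * c * (1 / δ ^ ν) := by
        linarith [mul_le_mul_of_nonneg_right hcM hx0.le]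
      _ = F * (c * (1 / δ ^ ν) + 1) := by ring
      _ ≤ _ := mul_le_mul_of_nonneg_left (Real.add_one_le_exp _) (by linarith)
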